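/- For every even integer α ≥ 2 and all x, y ∈ [0,1], the identity −1 + sym[K_α](x,y) = (1/(2π)^{2α})·Σ_{k=1}^∞ Σ_{ℓ=1}^∞ c^{sym}(k,ℓ)·cos(2πkx)·cos(2πℓy) holds, where the double series converges absolutely and c^{sym}(k,ℓ) = 6/k^{2α} if k = ℓ and c^{sym}(k,ℓ) = 4/(k^α ℓ^α) if k ≠ ℓ. -/

import Mathlib

/-!
For even `n` the function `B_n` has on `[0,1]` the Fourier expansion
`B_n(t) / n! = ± 2 (2π)⁻ⁿ ∑_k cos(2πkt) / kⁿ` (`hasSum_bern`).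

Since `B_τ(1 - x) = (-1)^τ B_τ(x)`, symmetrization annihilates the terms of `K_α` with `τ` odd and
fixes `B_α(x) B_α(y)`. The latter is a product of two absolutely convergent cosine series and
contributes the coefficient `4 / (k^α ℓ^α)` at every `(k, ℓ)`, the sign having been squared.
The term `-B_{2α}(|x - y|) / (2α)!` is `2 (2π)^{-2α} ∑_k cos(2πk(x - y)) / k^{2α}`; averaging over
the reflections replaces `cos(2πk(x - y))` by `cos(2πkx) cos(2πky)` (`hasSum_diag`), so it
contributes `2 / k^{2α}` on the diagonal `k = ℓ` only.
-/

open Real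

/-- The Bernoulli polynomial `B_n` evaluated at a real `x`. -/
noncomputable def bern (n : ℕ) (x : ℝ) : ℝ := Polynomial.aeval x (Polynomial.bernoulli n)

/-- For even `α`, the kernel
`K_α(x,y) = 1 + Σ_{τ odd, 1≤τ≤α−1} B_τ(x)B_τ(y)/(τ!)² + B_α(x)B_α(y)/(α!)² − B_{2α}(|x−y|)/(2α)!`. -/
noncomputable def Ksob (α : ℕ) (x y : ℝ) : ℝ :=
  1 + (∑ τ ∈ (Finset.Icc 1 (α - 1)).filter (fun τ => Odd τ),
        bern τ x * bern τ y / ((Nat.factorial τ : ℝ)) ^ 2)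
    + bern α x * bern α y / ((Nat.factorial α : ℝ)) ^ 2
    - bern (2 * α) |x - y| / ((Nat.factorial (2 * α) : ℝ))

/-- Symmetrization `sym[f](x,y) = (f(x,y)+f(1−x,y)+f(x,1−y)+f(1−x,1−y))/4`. -/
noncomputable def symf (f : ℝ → ℝ → ℝ) (x y : ℝ) : ℝ :=
  (f x y + f (1 - x) y + f x (1 - y) + f (1 - x) (1 - y)) / 4

/-- The Fourier coefficients `c^{sym}(k,ℓ)` of `−1 + sym[K_α](x,y)`. -/
noncomputable def csym (α k l : ℕ) : ℝ :=
  if k = l then 6 / (k : ℝ) ^ (2 * α) else 4 / ((k : ℝ) ^ α * (l : ℝ) ^ α)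

lemma bern_one_sub (n : ℕ) (x : ℝ) : bern n (1 - x) = (-1) ^ n * bern n x := by
  have h := bernoulliFun_eval_one_sub (k := n) (x := x)
  simpa [bernoulliFun, bern, Polynomial.eval_map_algebraMap] using h

lemma hasSum_bern {k : ℕ} (hk : k ≠ 0) {t : ℝ} (ht : t ∈ Set.Icc (0 : ℝ) 1) :
    HasSum (fun n : ℕ+ => 1 / ((n : ℕ) : ℝ) ^ (2 * k) * Real.cos (2 * π * ((n : ℕ) : ℝ) * t))
      ((-1 : ℝ) ^ (k + 1) * (2 * π) ^ (2 * k) / 2 / (Nat.factorial (2 * k) : ℝ) *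
        bern (2 * k) t) := by
  have h := hasSum_one_div_nat_pow_mul_cos hk ht
  rw [Polynomial.eval_map_algebraMap] at h
  refine (PNat.coe_injective.hasSum_iff ?_).mpr h
  intro n hn
  -- Only `n = 0` is missed by `ℕ+`, and there `1 / 0 = 0`.
  have h0 : n = 0 := by
    by_contra h0
    exact hn ⟨⟨n, Nat.pos_of_ne_zero h0⟩, rfl⟩
  simp [h0, hk]

/-- The symmetrized last term of `Ksob`: the four reflected distances only involve `x - y` and
`x + y` up to sign and integer shift, and the two cosines average to a product. -/
lemma hasSum_diag {α : ℕ} (hα : α ≠ 0) (hαe : Even α) {x y : ℝ}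
    (hx : x ∈ Set.Icc (0 : ℝ) 1) (hy : y ∈ Set.Icc (0 : ℝ) 1) :
    HasSum (fun n : ℕ+ => 2 / ((n : ℕ) : ℝ) ^ (2 * α) * Real.cos (2 * π * ((n : ℕ) : ℝ) * x) *
        Real.cos (2 * π * ((n : ℕ) : ℝ) * y))
      (-((2 * π) ^ (2 * α)) / (Nat.factorial (2 * α) : ℝ) *
        symf (fun u v => bern (2 * α) |u - v|) x y) := by
  obtain ⟨hx0, hx1⟩ := hx
  obtain ⟨hy0, hy1⟩ := hy
  have mem : ∀ u v : ℝ, 0 ≤ u → u ≤ 1 → 0 ≤ v → v ≤ 1 → |u - v| ∈ Set.Icc (0 : ℝ) 1 :=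
    fun u v _ _ _ _ => ⟨abs_nonneg _, abs_le.mpr ⟨by linarith, by linarith⟩⟩
  have cos_abs : ∀ (n : ℕ) (t : ℝ), Real.cos (2 * π * n * |t|) = Real.cos (2 * π * n * t) := by
    intro n t
    rcases abs_choice t with h | h <;> rw [h]
    rw [mul_neg, Real.cos_neg]
  have h1 := hasSum_bern hα (mem x y hx0 hx1 hy0 hy1)
  have h2 := hasSum_bern hα
    (mem (1 - x) y (by linarith) (by linarith) hy0 hy1)
  have h3 := hasSum_bern hα
    (mem x (1 - y) hx0 hx1 (by linarith) (by linarith))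
  have h4 := hasSum_bern hα
    (mem (1 - x) (1 - y) (by linarith) (by linarith) (by linarith) (by linarith))
  have h := (((h1.add h2).add h3).add h4).mul_left (1 / 2 : ℝ)
  convert! h using 1
  · funext n
    simp only [cos_abs]
    have e2 : Real.cos (2 * π * ((n : ℕ) : ℝ) * (1 - x - y)) =
        Real.cos (2 * π * ((n : ℕ) : ℝ) * x + 2 * π * ((n : ℕ) : ℝ) * y) := by
      rw [← Real.cos_nat_mul_two_pi_sub _ (n : ℕ)]
      congr 1
      ring
    have e3 : Real.cos (2 * π * ((n : ℕ) : ℝ) * (x - (1 - y))) =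
        Real.cos (2 * π * ((n : ℕ) : ℝ) * x + 2 * π * ((n : ℕ) : ℝ) * y) := by
      rw [← Real.cos_add_nat_mul_two_pi _ (n : ℕ)]
      congr 1
      ring
    have e4 : Real.cos (2 * π * ((n : ℕ) : ℝ) * (1 - x - (1 - y))) =
        Real.cos (2 * π * ((n : ℕ) : ℝ) * x - 2 * π * ((n : ℕ) : ℝ) * y) := by
      rw [← Real.cos_neg]
      congr 1
      ring
    have e1 : 2 * π * ((n : ℕ) : ℝ) * (x - y) =
        2 * π * ((n : ℕ) : ℝ) * x - 2 * π * ((n : ℕ) : ℝ) * y := by ring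
    rw [e1, e2, e3, e4, Real.cos_add, Real.cos_sub]
    ring
  · rw [hαe.add_one.neg_one_pow]
    simp only [symf]
    ring

lemma symf_Ksob {α : ℕ} (hαe : Even α) (x y : ℝ) :
    -1 + symf (Ksob α) x y = bern α x * bern α y / (Nat.factorial α : ℝ) ^ 2
      - symf (fun u v => bern (2 * α) |u - v|) x y / (Nat.factorial (2 * α) : ℝ) := by
  have odd_left : ∀ u v : ℝ, (∑ τ ∈ (Finset.Icc 1 (α - 1)).filter (fun τ => Odd τ),
        bern τ (1 - u) * bern τ v / ((Nat.factorial τ : ℝ)) ^ 2) =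
      -∑ τ ∈ (Finset.Icc 1 (α - 1)).filter (fun τ => Odd τ),
        bern τ u * bern τ v / ((Nat.factorial τ : ℝ)) ^ 2 := by
    intro u v
    rw [← Finset.sum_neg_distrib]
    refine Finset.sum_congr rfl fun τ hτ => ?_
    rw [bern_one_sub, (Finset.mem_filter.mp hτ).2.neg_one_pow]
    ring
  simp only [symf, Ksob, odd_left]
  simp only [bern_one_sub α, hαe.neg_one_pow]
  ring

theorem stmt3 (α : ℕ) (hα : 2 ≤ α) (hαe : Even α) (x y : ℝ)
    (hx : x ∈ Set.Icc (0 : ℝ) 1) (hy : y ∈ Set.Icc (0 : ℝ) 1) :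
    Summable (fun p : ℕ+ × ℕ+ =>
      |csym α (p.1 : ℕ) (p.2 : ℕ) * Real.cos (2 * π * ((p.1 : ℕ) : ℝ) * x) *
        Real.cos (2 * π * ((p.2 : ℕ) : ℝ) * y)|) ∧
    -1 + symf (Ksob α) x y =
      (1 / (2 * π) ^ (2 * α)) * ∑' p : ℕ+ × ℕ+,
        csym α (p.1 : ℕ) (p.2 : ℕ) * Real.cos (2 * π * ((p.1 : ℕ) : ℝ) * x) *
          Real.cos (2 * π * ((p.2 : ℕ) : ℝ) * y) := by
  have hα0 : α ≠ 0 := by omega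
  have main : HasSum (fun p : ℕ+ × ℕ+ =>
      csym α (p.1 : ℕ) (p.2 : ℕ) * Real.cos (2 * π * ((p.1 : ℕ) : ℝ) * x) *
        Real.cos (2 * π * ((p.2 : ℕ) : ℝ) * y))
      ((2 * π) ^ (2 * α) * (-1 + symf (Ksob α) x y)) := by
    obtain ⟨m, hm⟩ := hαe.two_dvd
    have hm0 : m ≠ 0 := by omega
    have hX := hasSum_bern hm0 hx
    have hY := hasSum_bern hm0 hy
    rw [← hm] at hX hY
    have hprod := (hX.mul hY (summable_mul_of_summable_norm hX.summable.norm
      hY.summable.norm)).mul_left 4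
    have diag_inj : Function.Injective (fun n : ℕ+ => (n, n)) :=
      fun a b h => congrArg Prod.fst h
    have hdiag : HasSum (fun p : ℕ+ × ℕ+ => if p.1 = p.2 then
        2 / ((p.1 : ℕ) : ℝ) ^ (2 * α) * Real.cos (2 * π * ((p.1 : ℕ) : ℝ) * x) *
        Real.cos (2 * π * ((p.2 : ℕ) : ℝ) * y) else 0)
        (-((2 * π) ^ (2 * α)) / (Nat.factorial (2 * α) : ℝ) *
          symf (fun u v => bern (2 * α) |u - v|) x y) := by
      refine (diag_inj.hasSum_iff ?_).mp ?_
      · rintro ⟨a, b⟩ hab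
        refine if_neg fun h => hab ⟨a, ?_⟩
        exact Prod.ext rfl h
      · simpa [Function.comp_def] using hasSum_diag hα0 hαe hx hy
    convert! hprod.add hdiag using 1
    · funext p
      by_cases h : p.1 = p.2
      · simp only [csym, h, if_true]
        ring
      · have h' : (p.1 : ℕ) ≠ (p.2 : ℕ) := fun e => h (PNat.coe_injective e)
        simp only [csym, h, h', if_false]
        field_simp
        ring
    · rw [symf_Ksob hαe]
      have hs : ((-1 : ℝ) ^ (m + 1)) ^ 2 = 1 := by
        rw [← pow_mul, mul_comm, pow_mul]
        norm_num
      linear_combination (-(2 * π) ^ (2 * α) * bern α x * bern α y /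
        (Nat.factorial α : ℝ) ^ 2) * hs
  refine ⟨main.summable.abs, ?_⟩
  rw [main.tsum_eq]
  have hpi : (2 * π) ^ (2 * α) ≠ 0 := by positivity
  field_simp
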